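/- Let X be a real Banach space and let F : X → ℝ be a locally Lipschitz functional that is bounded from below. If h : [0,∞) → [0,∞) is a nondecreasing function with ∫₀^∞ dρ/(1+h(ρ)) = ∞, then there exists a sequence {x_n} in X such that F(x_n) → inf_X F and λ_F(x_n)(1+h(‖x_n‖)) → 0. -/

import Mathlib

/-! For `H t = ∫₀ᵗ dρ / (1 + h ρ)` the penalized functional `G = F + ε H(‖·‖)` is continuous and
bounded below, and since `H` is unbounded, every point where `G` is at most `G x₀` lies in a ball
of some radius `R`. Ekeland's principle (`ekeland`) with slope `ε / (1 + h R)` gives a point `z` in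
this ball with `G z ≤ G x₀` and `G z ≤ G x + ε / (1 + h R) * ‖x - z‖` for all `x`. As `h` is
nondecreasing, `H(‖x‖) - H(‖z‖) ≤ ‖x - z‖ / (1 + h ‖z‖)`: trivially if `‖x‖ ≤ ‖z‖`, and otherwise
because the integrand is at most `1 / (1 + h ‖z‖)` to the right of `‖z‖`. Hence
`F z ≤ F x + 2 ε / (1 + h ‖z‖) * ‖x - z‖` for all `x`, which bounds `λ_F(z)` by
`2 ε / (1 + h ‖z‖)` through a Hahn–Banach argument (`lambdaF_le`). Taking `x₀` almost minimizing
for `F` and then `ε` small compared with `H ‖x₀‖` keeps `F z` close to the infimum.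
-/

open Filter Topology Set

noncomputable section

/-- Clarke generalized directional derivative of `F` at `x` in direction `v`. -/
def clarkeDeriv {X : Type*} [NormedAddCommGroup X] [NormedSpace ℝ X]
    (F : X → ℝ) (x v : X) : ℝ :=
  Filter.limsup (fun p : X × ℝ => (F (x + p.1 + p.2 • v) - F (x + p.1)) / p.2)
    ((nhds (0 : X)) ×ˢ (nhdsWithin (0 : ℝ) (Set.Ioi 0)))

/-- Clarke generalized gradient of `F` at `x`. -/
def clarkeSubdiff {X : Type*} [NormedAddCommGroup X] [NormedSpace ℝ X]
    (F : X → ℝ) (x : X) : Set (X →L[ℝ] ℝ) :=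
  {w | ∀ v, w v ≤ clarkeDeriv F x v}

/-- `λ_F(x) = min_{w* ∈ ∂F(x)} ‖w*‖`. -/
def lambdaF {X : Type*} [NormedAddCommGroup X] [NormedSpace ℝ X]
    (F : X → ℝ) (x : X) : ℝ :=
  sInf ((fun w : X →L[ℝ] ℝ => ‖w‖) '' clarkeSubdiff F x)

/-- The weighted Chang Palais–Smale condition for the weight `h`. -/
def WeightedChangPS {X : Type*} [NormedAddCommGroup X] [NormedSpace ℝ X]
    (F : X → ℝ) (h : ℝ → ℝ) : Prop :=
  ∀ x : ℕ → X, (∃ C : ℝ, ∀ n, |F (x n)| ≤ C) →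
    Filter.Tendsto (fun n => lambdaF F (x n) * (1 + h ‖x n‖)) Filter.atTop (nhds 0) →
    ∃ (z : X) (φ : ℕ → ℕ), StrictMono φ ∧
      Filter.Tendsto (fun n => x (φ n)) Filter.atTop (nhds z)

/-- The Banach constant `Sur A = inf_{‖v*‖=1} ‖A* v*‖`. -/
def surBanach {X Y : Type*} [NormedAddCommGroup X] [NormedSpace ℝ X]
    [NormedAddCommGroup Y] [NormedSpace ℝ Y] (A : X →L[ℝ] Y) : ℝ :=
  sInf ((fun v : Y →L[ℝ] ℝ => ‖v.comp A‖) '' {v : Y →L[ℝ] ℝ | ‖v‖ = 1})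

/-- Norm-coercivity: `‖f x‖ → ∞` as `‖x‖ → ∞`. -/
def NormCoercive {X Y : Type*} [NormedAddCommGroup X] [NormedAddCommGroup Y]
    (f : X → Y) : Prop :=
  Filter.Tendsto (fun x => ‖f x‖) (Filter.comap (fun x : X => ‖x‖) Filter.atTop) Filter.atTop

/-! ### Ekeland's principle -/

/-- Weak form of Ekeland's variational principle. For `S x = {y | G y + δ * dist y x ≤ G x}`
(the down-set of `x` in Ekeland's order), each step of the sequence almost minimizes `G` on the
current `S`, so these nested closed sets shrink to a single point. -/
theorem ekeland {X : Type*} [MetricSpace X] [CompleteSpace X] (G : X → ℝ) (hG : Continuous G)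
    (hb : BddBelow (Set.range G)) {δ : ℝ} (hδ : 0 < δ) (x₀ : X) :
    ∃ z, G z ≤ G x₀ ∧ ∀ x, G z ≤ G x + δ * dist x z := by
  obtain ⟨m, hm⟩ := hb
  have hm' : ∀ x, m ≤ G x := fun x => hm ⟨x, rfl⟩
  let S : X → Set X := fun x => {y | G y + δ * dist y x ≤ G x}
  have hself : ∀ x, x ∈ S x := fun x => by simp [S]
  have htrans : ∀ x y, y ∈ S x → S y ⊆ S x := by
    intro x y hy u hu
    simp only [S, mem_ofPred_eq] at *
    have := mul_le_mul_of_nonneg_left (dist_triangle u y x) hδ.le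
    linarith
  have hstep : ∀ (n : ℕ) (x : X), ∃ y ∈ S x, ∀ u ∈ S x, G y ≤ G u + 1 / ((n : ℝ) + 1) := by
    intro n x
    have hpos : (0 : ℝ) < 1 / ((n : ℝ) + 1) := by positivity
    have hne : (G '' S x).Nonempty := ⟨_, x, hself x, rfl⟩
    have hbd : BddBelow (G '' S x) := ⟨m, by rintro _ ⟨u, -, rfl⟩; exact hm' u⟩
    obtain ⟨_, ⟨y, hy, rfl⟩, hlt⟩ := exists_lt_of_csInf_lt hne (lt_add_of_pos_right _ hpos)
    refine ⟨y, hy, fun u hu => ?_⟩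
    have := csInf_le hbd (mem_image_of_mem G hu)
    linarith
  choose next hnext hnear using hstep
  let s : ℕ → X := fun n => Nat.rec x₀ (fun n x => next n x) n
  have hs : ∀ n, s (n + 1) = next n (s n) := fun n => rfl
  have hmem : ∀ n m, n ≤ m → s m ∈ S (s n) := by
    intro n m hnm
    induction m, hnm using Nat.le_induction with
    | base => exact hself _
    | succ k _ ih => exact htrans _ _ ih (hs k ▸ hnext k (s k))
  have hdist : ∀ n, ∀ u ∈ S (s (n + 1)), dist u (s (n + 1)) ≤ 1 / ((n : ℝ) + 1) / δ := by
    intro n u hu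
    have h1 : u ∈ S (s n) := htrans _ _ (hmem n (n + 1) n.le_succ) hu
    have h2 := hnear n (s n) u h1
    rw [← hs] at h2
    simp only [S, mem_ofPred_eq] at hu
    rw [le_div_iff₀ hδ]
    linarith
  have hlim0 : Tendsto (fun n : ℕ => 1 / ((n : ℝ) + 1) / δ) atTop (𝓝 0) := by
    simpa using (tendsto_one_div_add_atTop_nhds_zero_nat (𝕜 := ℝ)).div_const δ
  have hcau : CauchySeq (fun n => s (n + 1)) := by
    refine cauchySeq_of_le_tendsto_0' (fun n : ℕ => 1 / ((n : ℝ) + 1) / δ) ?_ hlim0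
    intro n m hnm
    rw [dist_comm]
    exact hdist n _ (hmem (n + 1) (m + 1) (by omega))
  obtain ⟨z, hz⟩ := cauchySeq_tendsto_of_complete hcau
  have hzS : ∀ n, z ∈ S (s n) := by
    intro n
    have hcl : IsClosed (S (s n)) := by
      apply isClosed_le <;> fun_prop
    refine hcl.mem_of_tendsto hz ?_
    filter_upwards [eventually_ge_atTop n] with k hk
    exact hmem n (k + 1) (by omega)
  refine ⟨z, ?_, fun x => ?_⟩
  · have h0 : G z + δ * dist z x₀ ≤ G x₀ := hzS 0
    have : 0 ≤ δ * dist z x₀ := by positivity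
    linarith
  · by_contra! hlt
    have hx : x ∈ S z := hlt.le
    have hconv : Tendsto (fun n => s (n + 1)) atTop (𝓝 x) := by
      rw [tendsto_iff_dist_tendsto_zero]
      refine squeeze_zero (fun _ => dist_nonneg) (fun n => ?_) hlim0
      rw [dist_comm]
      exact hdist n x (htrans _ _ (hzS (n + 1)) hx)
    have hxz := tendsto_nhds_unique hconv hz
    subst hxz
    simp at hlt

/-! ### Sublinearity of the Clarke derivative -/

section Clarke

variable {X : Type*} [NormedAddCommGroup X]

/-- The filter along which the `limsup` in `clarkeDeriv` is taken. -/
abbrev clarkeFilter (X : Type*) [NormedAddCommGroup X] : Filter (X × ℝ) :=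
  (nhds (0 : X)) ×ˢ (nhdsWithin (0 : ℝ) (Set.Ioi 0))

theorem clarkeFilter_pos : ∀ᶠ p in clarkeFilter X, 0 < p.2 :=
  tendsto_snd.eventually self_mem_nhdsWithin

theorem clarkeFilter_fst : Tendsto Prod.fst (clarkeFilter X) (𝓝 0) := tendsto_fst

theorem clarkeFilter_snd : Tendsto Prod.snd (clarkeFilter X) (𝓝 0) :=
  tendsto_snd.mono_right nhdsWithin_le_nhds

variable [NormedSpace ℝ X]

/-- The difference quotient whose `limsup` is `clarkeDeriv`. -/
abbrev clarkeQuot (F : X → ℝ) (x v : X) (p : X × ℝ) : ℝ :=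
  (F (x + p.1 + p.2 • v) - F (x + p.1)) / p.2

theorem clarkeQuot_bound {F : X → ℝ} (hF : LocallyLipschitz F) (x v : X) :
    ∃ C : ℝ, ∀ᶠ p in clarkeFilter X, |clarkeQuot F x v p| ≤ C := by
  obtain ⟨K, t, ht, hK⟩ := hF x
  refine ⟨K * ‖v‖, ?_⟩
  have h1 : Tendsto (fun p : X × ℝ => x + p.1) (clarkeFilter X) (𝓝 x) := by
    simpa using tendsto_const_nhds.add (clarkeFilter_fst (X := X))
  have h2 : Tendsto (fun p : X × ℝ => x + p.1 + p.2 • v) (clarkeFilter X) (𝓝 x) := by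
    simpa using h1.add ((clarkeFilter_snd (X := X)).smul_const v)
  filter_upwards [clarkeFilter_pos, h1.eventually ht, h2.eventually ht] with p hp hp1 hp2
  have := hK.dist_le_mul _ hp2 _ hp1
  rw [Real.dist_eq, dist_eq_norm, add_sub_cancel_left, norm_smul, Real.norm_eq_abs,
    abs_of_pos hp] at this
  rw [clarkeQuot, abs_div, abs_of_pos hp, div_le_iff₀ hp]
  linarith

theorem clarkeQuot_isBoundedUnder {F : X → ℝ} (hF : LocallyLipschitz F) (x v : X) :
    IsBoundedUnder (· ≤ ·) (clarkeFilter X) (clarkeQuot F x v) := by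
  obtain ⟨C, hC⟩ := clarkeQuot_bound hF x v
  exact ⟨C, eventually_map.2 (hC.mono fun p hp => (abs_le.1 hp).2)⟩

theorem clarkeQuot_isCoboundedUnder {F : X → ℝ} (hF : LocallyLipschitz F) (x v : X) :
    IsCoboundedUnder (· ≤ ·) (clarkeFilter X) (clarkeQuot F x v) := by
  obtain ⟨C, hC⟩ := clarkeQuot_bound hF x v
  have : IsBoundedUnder (· ≥ ·) (clarkeFilter X) (clarkeQuot F x v) :=
    ⟨-C, eventually_map.2 (hC.mono fun p hp => (abs_le.1 hp).1)⟩
  exact this.isCoboundedUnder_le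

theorem clarkeDeriv_le {F : X → ℝ} (hF : LocallyLipschitz F) {x v : X} {a : ℝ}
    (H : ∀ᶠ p in clarkeFilter X, clarkeQuot F x v p ≤ a) : clarkeDeriv F x v ≤ a :=
  limsup_le_of_le (clarkeQuot_isCoboundedUnder hF x v) H

theorem eventually_lt_of_clarkeDeriv_lt {F : X → ℝ} (hF : LocallyLipschitz F) {x v : X} {a : ℝ}
    (H : clarkeDeriv F x v < a) : ∀ᶠ p in clarkeFilter X, clarkeQuot F x v p < a :=
  eventually_lt_of_limsup_lt H (clarkeQuot_isBoundedUnder hF x v)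

theorem clarkeDeriv_smul_le {F : X → ℝ} (hF : LocallyLipschitz F) (x : X) {c : ℝ} (hc : 0 < c)
    (v : X) : clarkeDeriv F x (c • v) ≤ c * clarkeDeriv F x v := by
  refine le_of_forall_pos_le_add fun ε hε => clarkeDeriv_le hF ?_
  have hlt : clarkeDeriv F x v < clarkeDeriv F x v + ε / c := by
    have : 0 < ε / c := by positivity
    linarith
  have htend : Tendsto (fun p : X × ℝ => (p.1, c * p.2)) (clarkeFilter X) (clarkeFilter X) := by
    refine clarkeFilter_fst.prodMk (tendsto_nhdsWithin_iff.2 ⟨?_, ?_⟩)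
    · simpa using (clarkeFilter_snd (X := X)).const_mul c
    · filter_upwards [clarkeFilter_pos] with p hp
      exact mul_pos hc hp
  filter_upwards [clarkeFilter_pos, htend.eventually (eventually_lt_of_clarkeDeriv_lt hF hlt)]
    with p hp h
  have key : clarkeQuot F x (c • v) p = c * clarkeQuot F x v (p.1, c * p.2) := by
    simp only [clarkeQuot, smul_smul, mul_comm c p.2]
    field_simp
  rw [key]
  have := mul_le_mul_of_nonneg_left h.le hc.le
  rwa [mul_add, mul_div_cancel₀ _ hc.ne'] at this

theorem clarkeDeriv_smul {F : X → ℝ} (hF : LocallyLipschitz F) (x : X) {c : ℝ} (hc : 0 < c)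
    (v : X) : clarkeDeriv F x (c • v) = c * clarkeDeriv F x v := by
  refine le_antisymm (clarkeDeriv_smul_le hF x hc v) ?_
  have := clarkeDeriv_smul_le hF x (inv_pos.2 hc) (c • v)
  rw [inv_smul_smul₀ hc.ne'] at this
  have := mul_le_mul_of_nonneg_left this hc.le
  rwa [mul_inv_cancel_left₀ hc.ne'] at this

theorem clarkeDeriv_add_le {F : X → ℝ} (hF : LocallyLipschitz F) (x u v : X) :
    clarkeDeriv F x (u + v) ≤ clarkeDeriv F x u + clarkeDeriv F x v := by
  refine le_of_forall_pos_le_add fun ε hε => clarkeDeriv_le hF ?_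
  have hu : clarkeDeriv F x u < clarkeDeriv F x u + ε / 2 := by linarith
  have hv : clarkeDeriv F x v < clarkeDeriv F x v + ε / 2 := by linarith
  -- The base point is shifted by `t • u`; the `limsup` over base points absorbs the shift.
  have htend : Tendsto (fun p : X × ℝ => (p.1 + p.2 • u, p.2)) (clarkeFilter X)
      (clarkeFilter X) := by
    refine Tendsto.prodMk ?_ tendsto_snd
    simpa using (clarkeFilter_fst (X := X)).add ((clarkeFilter_snd (X := X)).smul_const u)
  filter_upwards [eventually_lt_of_clarkeDeriv_lt hF hu,
    htend.eventually (eventually_lt_of_clarkeDeriv_lt hF hv)] with p h1 h2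
  have key : clarkeQuot F x (u + v) p
      = clarkeQuot F x u p + clarkeQuot F x v (p.1 + p.2 • u, p.2) := by
    simp only [clarkeQuot, smul_add, ← add_assoc]
    ring
  rw [key]
  linarith

theorem clarkeDeriv_zero {F : X → ℝ} (hF : LocallyLipschitz F) (x : X) :
    clarkeDeriv F x 0 = 0 := by
  have := clarkeDeriv_smul hF x (two_pos : (0 : ℝ) < 2) 0
  rw [smul_zero] at this
  linarith

/-! ### Slope bounds and `lambdaF` -/

theorem neg_le_clarkeDeriv {F : X → ℝ} (hF : LocallyLipschitz F) {z : X} {c : ℝ}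
    (hz : ∀ x, F z ≤ F x + c * ‖x - z‖) (v : X) : -(c * ‖v‖) ≤ clarkeDeriv F z v := by
  refine le_limsup_of_frequently_le ?_ (clarkeQuot_isBoundedUnder hF z v)
  -- Only the base point `z` itself is needed: the quotients at `(0, t)` are frequent.
  have htend : Tendsto (fun t : ℝ => ((0 : X), t)) (𝓝[>] 0) (clarkeFilter X) :=
    tendsto_const_nhds.prodMk tendsto_id
  refine htend.frequently (Eventually.frequently ?_)
  filter_upwards [self_mem_nhdsWithin] with t ht
  have ht : 0 < t := ht
  rw [le_div_iff₀ ht]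
  have := hz (z + t • v)
  rw [add_sub_cancel_left, norm_smul, Real.norm_eq_abs, abs_of_pos ht] at this
  simp only [add_zero]
  linarith

/-- Hahn–Banach on `X × X`: the zero functional on the antidiagonal is dominated by
`(u, v) ↦ F⁰(z; u) + c‖v‖`. The first component of a dominated extension lies in the Clarke
gradient, and since it agrees with the second component its norm is at most `c`. -/
theorem lambdaF_le {F : X → ℝ} (hF : LocallyLipschitz F) {z : X} {c : ℝ} (hc : 0 ≤ c)
    (hz : ∀ x, F z ≤ F x + c * ‖x - z‖) : lambdaF F z ≤ c := by
  let D : Submodule ℝ (X × X) := LinearMap.ker (LinearMap.fst ℝ X X + LinearMap.snd ℝ X X)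
  obtain ⟨g, hg0, hgN⟩ := exists_extension_of_le_sublinear (E := X × X)
    (⟨D, 0⟩ : (X × X) →ₗ.[ℝ] ℝ) (fun p => clarkeDeriv F z p.1 + c * ‖p.2‖)
    (by
      intro r hr p
      simp only [Prod.smul_fst, Prod.smul_snd, clarkeDeriv_smul hF z hr, norm_smul,
        Real.norm_eq_abs, abs_of_pos hr]
      ring)
    (by
      intro p q
      have h1 := clarkeDeriv_add_le hF z p.1 q.1
      have h2 := mul_le_mul_of_nonneg_left (norm_add_le p.2 q.2) hc
      simp only [Prod.fst_add, Prod.snd_add]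
      linarith)
    (by
      rintro ⟨p, hp⟩
      have hp' : p.1 + p.2 = 0 := hp
      have h1 := neg_le_clarkeDeriv hF hz p.1
      rw [eq_neg_of_add_eq_zero_left hp', norm_neg] at h1
      change (0 : ℝ) ≤ clarkeDeriv F z p.1 + c * ‖p.2‖
      rw [eq_neg_of_add_eq_zero_left hp']
      linarith)
  have hswap : ∀ u, g (u, 0) = g (0, u) := by
    intro u
    have h1 : g (u, -u) = 0 := hg0 ⟨(u, -u), by simp [D]⟩
    have h2 : (u, (0 : X)) = (u, -u) + (0, u) := by simp
    rw [h2, map_add, h1, zero_add]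
  let w₀ : X →ₗ[ℝ] ℝ := g.comp (LinearMap.inl ℝ X X)
  have hw₀ : ∀ u, w₀ u ≤ c * ‖u‖ := by
    intro u
    have := hgN (0, u)
    rw [← hswap, clarkeDeriv_zero hF, zero_add] at this
    exact this
  have hnorm : ∀ u, ‖w₀ u‖ ≤ c * ‖u‖ := by
    intro u
    have h1 := hw₀ (-u)
    rw [map_neg, norm_neg] at h1
    exact abs_le.2 ⟨by linarith, hw₀ u⟩
  let w : X →L[ℝ] ℝ := w₀.mkContinuous c hnorm
  have hw : w ∈ clarkeSubdiff F z := by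
    intro v
    have := hgN (v, 0)
    rw [norm_zero, mul_zero, add_zero] at this
    exact this
  refine (csInf_le ⟨0, ?_⟩ (mem_image_of_mem _ hw)).trans (w₀.mkContinuous_norm_le hc hnorm)
  rintro _ ⟨u, -, rfl⟩
  exact norm_nonneg u

theorem lambdaF_nonneg (F : X → ℝ) (x : X) : 0 ≤ lambdaF F x := by
  refine Real.sInf_nonneg ?_
  rintro _ ⟨u, -, rfl⟩
  exact norm_nonneg u

end Clarke

/-! ### The radial penalty -/

/-- The function `H t = ∫₀ᵗ dρ / (1 + h ρ)`, described by the properties that matter: it is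
unbounded, and its slope to the right of `a` is at most `1 / (1 + h a)`. -/
theorem exists_penalty (h : ℝ → ℝ) (hmono : MonotoneOn h (Set.Ici 0))
    (hnonneg : ∀ t ∈ Set.Ici (0:ℝ), 0 ≤ h t)
    (hint : ∫⁻ ρ in Set.Ioi (0:ℝ), ENNReal.ofReal (1 / (1 + h ρ)) = ⊤) :
    ∃ H : ℝ → ℝ, Continuous H ∧ H 0 = 0 ∧ Monotone H ∧
      (∀ a b, 0 ≤ a → a ≤ b → H b - H a ≤ (b - a) / (1 + h a)) ∧ ∀ M, ∃ R, 0 ≤ R ∧ M < H R := by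
  -- `h` is arbitrary on negative numbers; truncating makes the integrand antitone on all of `ℝ`.
  let k : ℝ → ℝ := fun t => 1 / (1 + h (max t 0))
  have hpos : ∀ t, 0 < 1 + h (max t 0) := fun t => by
    have := hnonneg (max t 0) (mem_Ici.2 (le_max_right _ _))
    linarith
  have hk0 : ∀ t, 0 ≤ k t := fun t => (one_div_pos.2 (hpos t)).le
  have hk : Antitone k := by
    intro a b hab
    refine one_div_le_one_div_of_le (hpos a) ?_
    have := hmono (le_max_right a 0 : max a 0 ∈ Ici (0:ℝ)) (le_max_right b 0)
      (max_le_max_right 0 hab)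
    linarith
  have hki : ∀ a b, IntervalIntegrable k MeasureTheory.volume a b :=
    fun a b => hk.intervalIntegrable
  have hsub : ∀ a b, (∫ t in (0:ℝ)..b, k t) - ∫ t in (0:ℝ)..a, k t = ∫ t in a..b, k t :=
    fun a b => intervalIntegral.integral_interval_sub_left (hki _ _) (hki _ _)
  refine ⟨fun t => ∫ s in (0:ℝ)..t, k s, intervalIntegral.continuous_primitive hki 0,
    intervalIntegral.integral_same, ?_, ?_, ?_⟩
  · intro a b hab
    have h1 : 0 ≤ ∫ t in a..b, k t := intervalIntegral.integral_nonneg hab fun t _ => hk0 t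
    rw [← hsub] at h1
    simpa using h1
  · intro a b ha hab
    rw [hsub]
    have h1 := intervalIntegral.integral_mono_on hab (hki a b)
      (intervalIntegrable_const (c := k a)) fun t ht => hk ht.1
    rw [intervalIntegral.integral_const, smul_eq_mul] at h1
    have h2 : k a = 1 / (1 + h a) := by simp only [k, max_eq_left ha]
    rw [h2, mul_one_div] at h1
    exact h1
  · by_contra! hM
    obtain ⟨M, hM⟩ := hM
    have hI : MeasureTheory.IntegrableOn k (Ioi 0) := by
      refine MeasureTheory.integrableOn_Ioi_of_intervalIntegral_norm_bounded M 0
        (b := fun t : ℝ => t) (l := atTop) (fun t => (hki 0 t).1) tendsto_id ?_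
      filter_upwards [eventually_ge_atTop 0] with t ht
      simpa only [Real.norm_of_nonneg (hk0 _)] using hM t ht
    have hfin := hI.lintegral_lt_top
    rw [← hint] at hfin
    refine hfin.ne (MeasureTheory.setLIntegral_congr_fun measurableSet_Ioi fun t ht => ?_)
    simp only [k, max_eq_left (le_of_lt (mem_Ioi.1 ht))]

/-- Ekeland's principle is applied to `F + ε H(‖·‖)` with `ε` chosen after an almost minimizer
`x₀` of `F`, so that the penalty at `x₀` is at most `η`. -/
theorem exists_almost_critical {X : Type*} [NormedAddCommGroup X] [NormedSpace ℝ X]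
    [CompleteSpace X]
    (F : X → ℝ) (hF : LocallyLipschitz F) (hbdd : BddBelow (Set.range F))
    (h : ℝ → ℝ)
    (hmono : MonotoneOn h (Set.Ici 0))
    (hnonneg : ∀ t ∈ Set.Ici (0:ℝ), 0 ≤ h t)
    (hint : ∫⁻ ρ in Set.Ioi (0:ℝ), ENNReal.ofReal (1 / (1 + h ρ)) = ⊤) {η : ℝ} (hη : 0 < η) :
    ∃ z : X, F z ≤ (⨅ u : X, F u) + 2 * η ∧ lambdaF F z * (1 + h ‖z‖) ≤ 2 * η := by
  obtain ⟨H, hHc, hH0, hHm, hHs, hHu⟩ := exists_penalty h hmono hnonneg hint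
  have hHnn : ∀ x : X, 0 ≤ H ‖x‖ := fun x => hH0 ▸ hHm (norm_nonneg x)
  obtain ⟨x₀, hx₀⟩ := exists_lt_of_ciInf_lt (lt_add_of_pos_right (⨅ u : X, F u) hη)
  have hinf : ∀ x, (⨅ u : X, F u) ≤ F x := fun x => ciInf_le hbdd x
  have hA : 0 < 1 + H ‖x₀‖ := by linarith [hHnn x₀]
  set ε : ℝ := η / (1 + H ‖x₀‖) with hεdef
  have hε : 0 < ε := by positivity
  have hεη : ε ≤ η := div_le_self hη.le (by linarith [hHnn x₀])
  have hεH : ε * H ‖x₀‖ ≤ η := by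
    have : ε * (1 + H ‖x₀‖) = η := div_mul_cancel₀ _ hA.ne'
    linarith
  -- Beyond radius `R` the penalty alone exceeds the value at `x₀`.
  obtain ⟨R, hR0, hR⟩ := hHu (2 * η / ε)
  have hRpos : 0 < 1 + h R := by linarith [hnonneg R hR0]
  have hδ : 0 < ε / (1 + h R) := by positivity
  obtain ⟨z, hz0, hz⟩ := ekeland (fun x => F x + ε * H ‖x‖)
    (hF.continuous.add (continuous_const.mul (hHc.comp continuous_norm)))
    ⟨⨅ u : X, F u, by
      rintro _ ⟨x, rfl⟩
      have := mul_nonneg hε.le (hHnn x)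
      have := hinf x
      simp only
      linarith⟩ hδ x₀
  have hzR : ‖z‖ ≤ R := by
    by_contra! hlt
    have h1 := hHm hlt.le
    have h2 : 2 * η / ε < H ‖z‖ := hR.trans_le h1
    rw [div_lt_iff₀ hε] at h2
    have := hinf z
    linarith
  have hzpos : 0 < 1 + h ‖z‖ := by linarith [hnonneg ‖z‖ (norm_nonneg z)]
  have hδz : ε / (1 + h R) ≤ ε / (1 + h ‖z‖) := by
    refine div_le_div_of_nonneg_left hε.le hzpos ?_
    have := hmono (norm_nonneg z : ‖z‖ ∈ Ici (0:ℝ)) hR0 hzR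
    linarith
  have hslope : ∀ x, H ‖x‖ - H ‖z‖ ≤ ‖x - z‖ / (1 + h ‖z‖) := by
    intro x
    rcases le_total ‖z‖ ‖x‖ with hle | hle
    · refine (hHs _ _ (norm_nonneg z) hle).trans ?_
      gcongr
      exact norm_sub_norm_le x z
    · have h1 := hHm hle
      have h2 : 0 ≤ ‖x - z‖ / (1 + h ‖z‖) := by positivity
      linarith
  have hlam : lambdaF F z ≤ 2 * ε / (1 + h ‖z‖) := by
    refine lambdaF_le hF (by positivity) fun x => ?_
    have h1 := hz x
    rw [dist_eq_norm] at h1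
    have h2 := mul_le_mul_of_nonneg_left (hslope x) hε.le
    have h3 := mul_le_mul_of_nonneg_right hδz (norm_nonneg (x - z))
    have h4 : 2 * ε / (1 + h ‖z‖) * ‖x - z‖
        = ε * (‖x - z‖ / (1 + h ‖z‖)) + ε / (1 + h ‖z‖) * ‖x - z‖ := by ring
    linarith
  refine ⟨z, ?_, ?_⟩
  · have := mul_nonneg hε.le (hHnn z)
    linarith
  · rw [le_div_iff₀ hzpos] at hlam
    linarith

theorem minimizing_sequence {X : Type*} [NormedAddCommGroup X] [NormedSpace ℝ X]
    [CompleteSpace X]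
    (F : X → ℝ) (hF : LocallyLipschitz F) (hbdd : BddBelow (Set.range F))
    (h : ℝ → ℝ)
    (hmono : MonotoneOn h (Set.Ici 0))
    (hnonneg : ∀ t ∈ Set.Ici (0:ℝ), 0 ≤ h t)
    (hint : ∫⁻ ρ in Set.Ioi (0:ℝ), ENNReal.ofReal (1 / (1 + h ρ)) = ⊤) :
    ∃ x : ℕ → X,
      Filter.Tendsto (fun n => F (x n)) Filter.atTop (nhds (⨅ u : X, F u)) ∧
      Filter.Tendsto (fun n => lambdaF F (x n) * (1 + h ‖x n‖)) Filter.atTop (nhds 0) := by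
  choose x hx1 hx2 using fun n : ℕ =>
    exists_almost_critical F hF hbdd h hmono hnonneg hint (Nat.one_div_pos_of_nat (α := ℝ) (n := n))
  have hlim : Tendsto (fun n : ℕ => 2 * (1 / ((n : ℝ) + 1))) atTop (𝓝 0) := by
    simpa using (tendsto_one_div_add_atTop_nhds_zero_nat (𝕜 := ℝ)).const_mul 2
  refine ⟨x, ?_, ?_⟩
  · refine tendsto_of_tendsto_of_tendsto_of_le_of_le tendsto_const_nhds
      (by simpa using hlim.const_add (⨅ u : X, F u)) (fun n => ciInf_le hbdd (x n)) hx1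
  · refine squeeze_zero (fun n => mul_nonneg (lambdaF_nonneg F _) ?_) hx2 hlim
    linarith [hnonneg ‖x n‖ (norm_nonneg _)]
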